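/- arXiv:1004.3829 — 3 statements merged into one kernel-verified Lean document; each statement's English description precedes it below -/
import Mathlib

section
/- Let F be a field of characteristic 0, P = F[x,y,z], f ∈ P, and R = P/(f). Then the module of Kähler differentials Ω³_{R/F} is isomorphic as an R-module to R/(∂f/∂x, ∂f/∂y, ∂f/∂z). -/
open MvPolynomial

/-- A derivation vanishing on the kernel of a surjective algebra map descends to the target. -/
theorem Derivation.exists_descend {F A B M : Type*} [CommRing F] [CommRing A] [CommRing B]
    [Algebra F A] [Algebra F B] [Algebra A B] [IsScalarTower F A B] [AddCommGroup M]
    [Module F M] [Module A M] [Module B M] [IsScalarTower A B M]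
    (hsurj : Function.Surjective (algebraMap A B)) (d : Derivation F A M)
    (hd : ∀ a, algebraMap A B a = 0 → d a = 0) :
    ∃ e : Derivation F B M, ∀ a, e (algebraMap A B a) = d a := by
  obtain ⟨s, hs⟩ := hsurj.hasRightInverse
  have hsd (a b) (h : algebraMap A B a = algebraMap A B b) : d a = d b := by
    rw [← sub_eq_zero, ← map_sub]
    exact hd _ (by rw [map_sub, h, sub_self])
  let l : B →ₗ[F] M :=
    { toFun := fun b => d (s b)
      map_add' := fun x y => by
        rw [← map_add]
        exact hsd _ _ (by rw [map_add, hs, hs, hs])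
      map_smul' := fun r x => by
        rw [RingHom.id_apply, ← map_smul]
        exact hsd _ _ (by
          rw [hs, Algebra.algebraMap_eq_smul_one, smul_assoc,
            ← Algebra.algebraMap_eq_smul_one, hs]) }
  refine ⟨Derivation.mk' l fun x y => ?_, fun a => hsd _ _ (hs _)⟩
  have hmul : l (x * y) = d (s x * s y) := hsd _ _ (by rw [map_mul, hs, hs, hs])
  rw [hmul, d.leibniz, ← algebraMap_smul B (s x), ← algebraMap_smul B (s y), hs, hs]
  rfl

theorem MvPolynomial.derivation_eq_sum_pderiv_smul {F σ M : Type*} [CommRing F] [Fintype σ]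
    [AddCommGroup M] [Module F M] [Module (MvPolynomial σ F) M]
    (d : Derivation F (MvPolynomial σ F) M) (p : MvPolynomial σ F) :
    d p = ∑ i, pderiv i p • d (X i) := by
  classical
  induction p using MvPolynomial.induction_on with
  | C a => simp
  | add p q hp hq => simp [hp, hq, add_smul, Finset.sum_add_distrib]
  | mul_X p j hp =>
    simp [hp, pderiv_X, add_smul, mul_smul, Finset.sum_add_distrib, Finset.smul_sum,
      Pi.single_apply, ite_smul]

/-- The `n`-th exterior power of a module spanned by `n` vectors is cyclic. -/
theorem exteriorPower.exists_smul_ιMulti_of_span_eq_top {R M : Type*} [CommRing R]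
    [AddCommGroup M] [Module R M] {n : ℕ} (v : Fin n → M)
    (hv : Submodule.span R (Set.range v) = ⊤) (x : ⋀[R]^n M) :
    ∃ r : R, r • exteriorPower.ιMulti R n v = x := by
  rw [← Submodule.mem_span_singleton]
  have hx : x ∈ Submodule.span R (exteriorPower.ιMulti R n '' {a | Set.range a ⊆ Set.range v}) := by
    rw [exteriorPower.ιMulti_span_of_span R n M hv]
    trivial
  refine Submodule.span_le.mpr ?_ hx
  rintro _ ⟨a, ha, rfl⟩
  choose g hg using fun i => ha ⟨i, rfl⟩
  obtain rfl : v ∘ g = a := funext hg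
  by_cases hinj : Function.Injective g
  · let e := Equiv.ofBijective g (Finite.injective_iff_bijective.mp hinj)
    have he := (exteriorPower.ιMulti R n).map_perm v e
    rw [SetLike.mem_coe, show v ∘ g = v ∘ e from rfl, he, Units.smul_def]
    exact zsmul_mem (Submodule.mem_span_singleton_self _) _
  · obtain ⟨i, j, hij, hne⟩ : ∃ i j, g i = g j ∧ i ≠ j := by
      simpa [Function.Injective] using hinj
    rw [(exteriorPower.ιMulti R n).map_eq_zero_of_eq (v ∘ g) (congrArg v hij) hne]
    exact Submodule.zero_mem _

/-- The coefficients of a linear relation between `n` vectors `v i` annihilate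
`v 0 ∧ ⋯ ∧ v (n - 1)`. -/
theorem exteriorPower.smul_ιMulti_eq_zero_of_sum_eq_zero {R M : Type*} [CommRing R]
    [AddCommGroup M] [Module R M] {n : ℕ} {v : Fin n → M} {c : Fin n → R}
    (h : ∑ i, c i • v i = 0) (i : Fin n) :
    c i • exteriorPower.ιMulti R n v = 0 := by
  have key : exteriorPower.ιMulti R n (Function.update v i (∑ j, c j • v j)) =
      c i • exteriorPower.ιMulti R n v := by
    rw [AlternatingMap.map_update_sum, Finset.sum_eq_single i]
    · rw [AlternatingMap.map_update_smul, Function.update_eq_self]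
    · intro j _ hj
      rw [AlternatingMap.map_update_smul,
        AlternatingMap.map_update_self _ _ hj.symm, smul_zero]
    · simp
  rw [← key, h]
  exact AlternatingMap.map_update_zero _ _ _

/-- The top exterior power of the differentials of a hypersurface in affine `n`-space is the
quotient of the coordinate ring by the Jacobian ideal. -/
theorem KaehlerDifferential.nonempty_exteriorPower_equiv_jacobian_quotient {F R : Type*}
    [CommRing F] [CommRing R] [Algebra F R] {n : ℕ} [Algebra (MvPolynomial (Fin n) F) R]
    [IsScalarTower F (MvPolynomial (Fin n) F) R]
    (hsurj : Function.Surjective (algebraMap (MvPolynomial (Fin n) F) R))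
    (f : MvPolynomial (Fin n) F)
    (hker : RingHom.ker (algebraMap (MvPolynomial (Fin n) F) R) = Ideal.span {f}) :
    Nonempty ((⋀[R]^n (Ω[R⁄F])) ≃ₗ[R]
      (R ⧸ Ideal.span
        (Set.range fun i => algebraMap (MvPolynomial (Fin n) F) R (pderiv i f)))) := by
  set J : Ideal R :=
    Ideal.span (Set.range fun i => algebraMap (MvPolynomial (Fin n) F) R (pderiv i f))
  have hf : algebraMap (MvPolynomial (Fin n) F) R f = 0 := by
    rw [← RingHom.mem_ker, hker]
    exact Ideal.mem_span_singleton_self f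
  let v : Fin n → Ω[R⁄F] := fun i =>
    KaehlerDifferential.D F R (algebraMap (MvPolynomial (Fin n) F) R (X i))
  have hD (p : MvPolynomial (Fin n) F) :
      KaehlerDifferential.D F R (algebraMap (MvPolynomial (Fin n) F) R p) =
        ∑ i, algebraMap (MvPolynomial (Fin n) F) R (pderiv i p) • v i := by
    simpa [v] using
      derivation_eq_sum_pderiv_smul
        ((KaehlerDifferential.D F R).compAlgebraMap (MvPolynomial (Fin n) F)) p
  have hv : Submodule.span R (Set.range v) = ⊤ := by
    rw [eq_top_iff, ← KaehlerDifferential.span_range_derivation, Submodule.span_le]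
    rintro _ ⟨r, rfl⟩
    obtain ⟨p, rfl⟩ := hsurj r
    rw [hD]
    exact Submodule.sum_mem _ fun i _ =>
      Submodule.smul_mem _ _ (Submodule.subset_span ⟨i, rfl⟩)
  let d : Derivation F (MvPolynomial (Fin n) F) (Fin n → R ⧸ J) :=
    mkDerivation F fun i => Pi.single i 1
  have hdf : d f = 0 := by
    rw [derivation_eq_sum_pderiv_smul]
    refine Finset.sum_eq_zero fun i _ => ?_
    have hi : algebraMap R (R ⧸ J) (algebraMap (MvPolynomial (Fin n) F) R (pderiv i f)) = 0 :=
      Ideal.Quotient.eq_zero_iff_mem.mpr (Ideal.subset_span ⟨i, rfl⟩)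
    rw [← algebraMap_smul R, ← algebraMap_smul (R ⧸ J), hi, zero_smul]
  obtain ⟨e, he⟩ := Derivation.exists_descend hsurj d fun a ha => by
    obtain ⟨b, rfl⟩ := Ideal.mem_span_singleton.mp (hker ▸ RingHom.mem_ker.mpr ha)
    rw [d.leibniz, hdf, smul_zero, add_zero, ← algebraMap_smul R, hf, zero_smul]
  let det : (Fin n → R ⧸ J) [⋀^Fin n]→ₗ[R] (R ⧸ J) :=
    { (Matrix.detRowAlternating (R := R ⧸ J) (n := Fin n)).toMultilinearMap.restrictScalars R with
      map_eq_zero_of_eq' := Matrix.detRowAlternating.map_eq_zero_of_eq' }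
  let φ := exteriorPower.alternatingMapLinearEquiv (det.compLinearMap e.liftKaehlerDifferential)
  have hφ : φ (exteriorPower.ιMulti R n v) = 1 := by
    have hev : (fun i => e.liftKaehlerDifferential (v i)) =
        (1 : Matrix (Fin n) (Fin n) (R ⧸ J)) := by
      funext i
      simp only [v, Derivation.liftKaehlerDifferential_comp_D, he, d, mkDerivation_X]
      ext j
      simp [Matrix.one_apply, Pi.single_apply, eq_comm]
    simp only [φ, exteriorPower.alternatingMapLinearEquiv_apply_ιMulti,
      AlternatingMap.compLinearMap_apply]
    exact (congrArg Matrix.det hev).trans Matrix.det_one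
  let ψ : R ⧸ J →ₗ[R] ⋀[R]^n (Ω[R⁄F]) :=
    Submodule.liftQ J (LinearMap.toSpanSingleton R _ (exteriorPower.ιMulti R n v)) <| by
      refine Submodule.span_le.mpr ?_
      rintro _ ⟨i, rfl⟩
      refine exteriorPower.smul_ιMulti_eq_zero_of_sum_eq_zero
        (c := fun i => algebraMap (MvPolynomial (Fin n) F) R (pderiv i f)) ?_ i
      rw [← hD, hf, map_zero]
  have hψ (r : R) : ψ (Ideal.Quotient.mk J r) = r • exteriorPower.ιMulti R n v := rfl
  have hφψ (r : R) : φ (r • exteriorPower.ιMulti R n v) = Ideal.Quotient.mk J r := by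
    rw [map_smul, hφ, Algebra.smul_def, mul_one]
    rfl
  refine ⟨LinearEquiv.ofLinearMap φ ψ ?_ ?_⟩
  · refine LinearMap.ext fun y => ?_
    obtain ⟨r, rfl⟩ := Ideal.Quotient.mk_surjective y
    rw [LinearMap.comp_apply, hψ, hφψ, LinearMap.id_apply]
  · refine LinearMap.ext fun x => ?_
    obtain ⟨r, rfl⟩ := exteriorPower.exists_smul_ιMulti_of_span_eq_top v hv x
    rw [LinearMap.comp_apply, hφψ, hψ, LinearMap.id_apply]

/-- Let `F` be a field of characteristic zero, `P = F[x,y,z]`, `f ∈ P` and `R = P/(f)`.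
Then `Ω³_{R/F}` is isomorphic as an `R`-module to `R/(∂f/∂x, ∂f/∂y, ∂f/∂z)`. -/
theorem omega3_iso_jacobian_quotient (F : Type) [Field F] [CharZero F]
    (f : MvPolynomial (Fin 3) F) :
    letI P := MvPolynomial (Fin 3) F
    letI R := P ⧸ Ideal.span {f}
    letI π : P →+* R := Ideal.Quotient.mk (Ideal.span {f})
    Nonempty ((⋀[R]^3 (Ω[R⁄F])) ≃ₗ[R]
      (R ⧸ Ideal.span {π (pderiv 0 f), π (pderiv 1 f), π (pderiv 2 f)})) := by
  have hrange : Set.range (fun i => Ideal.Quotient.mk (Ideal.span {f}) (pderiv i f)) =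
      {Ideal.Quotient.mk (Ideal.span {f}) (pderiv 0 f),
        Ideal.Quotient.mk (Ideal.span {f}) (pderiv 1 f),
        Ideal.Quotient.mk (Ideal.span {f}) (pderiv 2 f)} := by
    ext x
    simp [Fin.exists_fin_succ, eq_comm]
  rw [← hrange]
  exact KaehlerDifferential.nonempty_exteriorPower_equiv_jacobian_quotient
    Ideal.Quotient.mk_surjective f Ideal.mk_ker
end

section
/- Let F be a field of characteristic 0 and R = F[x,y,z]/(f) a 2-dimensional isolated hypersurface singularity. Then Ext¹_R(Ω¹_{R/F}, R) ≅ Ω³_{R/F} ≅ R/(∂f/∂x, ∂f/∂y, ∂f/∂z); in particular Ext¹_R(Ω¹_{R/F}, R) has finite length equal to the Tjurina number τ. -/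
open MvPolynomial CategoryTheory Opposite

/-- The length of a module, defined as the Krull dimension of its submodule lattice. -/
noncomputable def moduleLength (R M : Type) [CommRing R] [AddCommGroup M] [Module R M] :
    WithBot ℕ∞ :=
  Order.krullDim (Submodule R M)

/-- The partial derivatives of a polynomial, evaluated along an algebra homomorphism. -/
noncomputable def gradientAlong {F R σ : Type*} [CommRing F] [CommRing R] [Algebra F R]
    (φ : MvPolynomial σ F →ₐ[F] R) (p : MvPolynomial σ F) : σ → R :=
  fun i => φ (pderiv i p)

section GradientAlong

variable {F R σ : Type*} [CommRing F] [CommRing R] [Algebra F R] (φ : MvPolynomial σ F →ₐ[F] R)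

lemma gradientAlong_add (p q : MvPolynomial σ F) :
    gradientAlong φ (p + q) = gradientAlong φ p + gradientAlong φ q := by
  ext i; simp [gradientAlong]

lemma gradientAlong_sub (p q : MvPolynomial σ F) :
    gradientAlong φ (p - q) = gradientAlong φ p - gradientAlong φ q := by
  ext i; simp [gradientAlong]

lemma gradientAlong_smul (c : F) (p : MvPolynomial σ F) :
    gradientAlong φ (c • p) = c • gradientAlong φ p := by
  ext i; simp [gradientAlong]

lemma gradientAlong_mul (p q : MvPolynomial σ F) :
    gradientAlong φ (p * q) = φ p • gradientAlong φ q + φ q • gradientAlong φ p := by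
  ext i; simp [gradientAlong]

lemma gradientAlong_X [DecidableEq σ] (i : σ) : gradientAlong φ (X i) = Pi.single i 1 := by
  ext j; simp [gradientAlong, pderiv_X, Pi.single_apply, eq_comm, apply_ite φ]

lemma derivation_eq_sum_gradientAlong [Fintype σ] {M : Type*} [AddCommGroup M] [Module F M]
    [Module R M] (d : Derivation F R M) (p : MvPolynomial σ F) :
    d (φ p) = ∑ i, gradientAlong φ p i • d (φ (X i)) := by
  classical
  induction p using MvPolynomial.induction_on with
  | C a => simp [gradientAlong, ← MvPolynomial.algebraMap_eq]
  | add p q hp hq => simp [gradientAlong_add, add_smul, Finset.sum_add_distrib, hp, hq]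
  | mul_X p i hp =>
    simp [gradientAlong_mul, gradientAlong_X, add_smul, Finset.sum_add_distrib, hp, Finset.smul_sum,
      mul_smul, Pi.single_apply, ite_smul]

variable {φ} {f : MvPolynomial σ F}

lemma mk_gradientAlong_eq_of_map_eq (hker : RingHom.ker φ = Ideal.span {f}) {p q : MvPolynomial σ F}
    (h : φ p = φ q) :
    (Submodule.span R {gradientAlong φ f}).mkQ (gradientAlong φ p) =
      (Submodule.span R {gradientAlong φ f}).mkQ (gradientAlong φ q) := by
  have hmem : p - q ∈ RingHom.ker φ := by simp [RingHom.mem_ker, h]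
  have hf : φ f = 0 := by
    rw [← RingHom.mem_ker, hker]; exact Ideal.mem_span_singleton_self f
  obtain ⟨a, ha⟩ := Ideal.mem_span_singleton.1 (hker ▸ hmem)
  rw [← sub_eq_zero, ← map_sub, ← gradientAlong_sub, ha, gradientAlong_mul, hf, zero_smul, zero_add,
    Submodule.mkQ_apply, Submodule.Quotient.mk_eq_zero]
  exact Submodule.smul_mem _ _ (Submodule.mem_span_singleton_self _)

/-- The derivation on a hypersurface with values in the free module on the coordinates modulo
the gradient of the equation. -/
noncomputable def gradientDerivation (hφ : Function.Surjective φ)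
    (hker : RingHom.ker φ = Ideal.span {f}) :
    Derivation F R ((σ → R) ⧸ Submodule.span R {gradientAlong φ f}) :=
  Derivation.mk'
    { toFun r := (Submodule.span R {gradientAlong φ f}).mkQ (gradientAlong φ (Function.surjInv hφ r))
      map_add' r s := by
        rw [← map_add, ← gradientAlong_add]
        exact mk_gradientAlong_eq_of_map_eq hker (by simp [Function.surjInv_eq hφ])
      map_smul' c r := by
        have h := mk_gradientAlong_eq_of_map_eq hker (p := Function.surjInv hφ (c • r))
          (q := c • Function.surjInv hφ r) (by simp [Function.surjInv_eq hφ])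
        rw [h, gradientAlong_smul]
        rfl }
    (fun r s => by
      have h := mk_gradientAlong_eq_of_map_eq hker (p := Function.surjInv hφ (r * s))
          (q := Function.surjInv hφ r * Function.surjInv hφ s) (by simp [Function.surjInv_eq hφ])
      simp only [LinearMap.coe_mk, AddHom.coe_mk]
      rw [h, gradientAlong_mul, map_add, map_smul, map_smul, Function.surjInv_eq hφ,
        Function.surjInv_eq hφ])

lemma gradientDerivation_apply (hφ : Function.Surjective φ)
    (hker : RingHom.ker φ = Ideal.span {f}) (p : MvPolynomial σ F) :
    gradientDerivation hφ hker (φ p) =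
      (Submodule.span R {gradientAlong φ f}).mkQ (gradientAlong φ p) :=
  mk_gradientAlong_eq_of_map_eq hker (Function.surjInv_eq hφ _)

variable [Fintype σ]

/-- The map from the free module on the coordinates to the Kähler differentials. -/
noncomputable def coordinateDifferentials (φ : MvPolynomial σ F →ₐ[F] R) :
    (σ → R) →ₗ[R] Ω[R⁄F] :=
  Fintype.linearCombination R (fun i => KaehlerDifferential.D F R (φ (X i)))

lemma coordinateDifferentials_gradientAlong (p : MvPolynomial σ F) :
    coordinateDifferentials φ (gradientAlong φ p) = KaehlerDifferential.D F R (φ p) := by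
  rw [derivation_eq_sum_gradientAlong, coordinateDifferentials, Fintype.linearCombination_apply]

lemma coordinateDifferentials_surjective (hφ : Function.Surjective φ) :
    Function.Surjective (coordinateDifferentials φ) := by
  rw [← LinearMap.range_eq_top, ← top_le_iff, ← KaehlerDifferential.span_range_derivation,
    Submodule.span_le]
  rintro _ ⟨r, rfl⟩
  obtain ⟨p, rfl⟩ := hφ r
  exact ⟨_, coordinateDifferentials_gradientAlong p⟩

lemma ker_coordinateDifferentials (hφ : Function.Surjective φ)
    (hker : RingHom.ker φ = Ideal.span {f}) :
    LinearMap.ker (coordinateDifferentials φ) = Submodule.span R {gradientAlong φ f} := by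
  classical
  have hf : φ f = 0 := by
    rw [← RingHom.mem_ker, hker]; exact Ideal.mem_span_singleton_self f
  apply le_antisymm
  · have h : (gradientDerivation hφ hker).liftKaehlerDifferential ∘ₗ coordinateDifferentials φ =
        (Submodule.span R {gradientAlong φ f}).mkQ := by
      refine LinearMap.pi_ext' fun i => LinearMap.ext_ring ?_
      simp [coordinateDifferentials, gradientDerivation_apply, gradientAlong_X]
    intro v hv
    rw [← Submodule.ker_mkQ (Submodule.span R {gradientAlong φ f}), ← h, LinearMap.mem_ker,
      LinearMap.comp_apply, LinearMap.mem_ker.1 hv, map_zero]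
  · rw [Submodule.span_singleton_le_iff_mem, LinearMap.mem_ker, coordinateDifferentials_gradientAlong,
      hf, map_zero]

end GradientAlong

lemma coeff_pderiv_eq {F σ : Type*} [CommSemiring F] (f : MvPolynomial σ F) (i : σ) (m : σ →₀ ℕ) :
    coeff m (pderiv i f) = coeff (m + Finsupp.single i 1) f * (m i + 1) := by
  classical
  induction f using MvPolynomial.induction_on' with
  | add p q hp hq => simp [hp, hq, add_mul]
  | monomial u a =>
    rw [pderiv_monomial, coeff_monomial, coeff_monomial]
    by_cases hu : u = m + Finsupp.single i 1
    · simp [hu]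
    · rw [if_neg hu, zero_mul]
      split_ifs with h
      · have hi : u i = 0 := by
          by_contra hi
          refine hu ?_
          rw [← h, tsub_add_cancel_of_le]
          simpa [Nat.one_le_iff_ne_zero] using hi
        simp [hi]
      · rfl

/-- Over a field of characteristic zero, a prime polynomial has a partial derivative it does not
divide. -/
lemma exists_not_dvd_pderiv {F σ : Type*} [Field F] [CharZero F] {f : MvPolynomial σ F}
    (hf : Prime f) : ∃ i, ¬ f ∣ pderiv i f := by
  obtain ⟨m, hm, hm0⟩ : ∃ m ∈ f.support, m ≠ 0 := by
    by_contra! h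
    have hC : f = C (coeff 0 f) := by
      rw [← totalDegree_eq_zero_iff_eq_C, totalDegree_eq_zero_iff]
      intro m hm i
      simp [h m hm]
    refine hf.not_isUnit (hC ▸ (IsUnit.mk0 _ fun h0 => hf.ne_zero ?_).map C)
    rw [hC, h0, map_zero]
  obtain ⟨i, hi⟩ := Finsupp.ne_iff.1 hm0
  rw [Finsupp.coe_zero, Pi.zero_apply] at hi
  have hd : pderiv i f ≠ 0 := by
    rw [ne_zero_iff]
    refine ⟨m - Finsupp.single i 1, ?_⟩
    rw [coeff_pderiv_eq, tsub_add_cancel_of_le (by simpa [Nat.one_le_iff_ne_zero] using hi)]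
    exact mul_ne_zero (mem_support_iff.1 hm) (Nat.cast_add_one_ne_zero _)
  refine ⟨i, fun ⟨g, hg⟩ => ?_⟩
  have hlt : degreeOf i (pderiv i f) < degreeOf i f := by
    rw [degreeOf_lt_iff ((Nat.pos_of_ne_zero hi).trans_le (monomial_le_degreeOf i hm))]
    intro n hn
    rw [mem_support_iff, coeff_pderiv_eq] at hn
    have := monomial_le_degreeOf i (mem_support_iff.2 (left_ne_zero_of_mul hn))
    simp at this
    omega
  have hg0 : g ≠ 0 := by rintro rfl; simp [hg] at hd
  rw [hg, degreeOf_mul_eq hf.ne_zero hg0] at hlt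
  omega

section ExteriorPower

variable {R M N P ι : Type*} [CommRing R] [AddCommGroup M] [Module R M] [AddCommGroup N]
  [Module R N] [AddCommGroup P] [Module R P]

lemma AlternatingMap.eq_of_map_eq [Finite ι] {π : N →ₗ[R] M} {a : N [⋀^ι]→ₗ[R] P}
    (ha : ∀ v i, v i ∈ LinearMap.ker π → a v = 0) {v w : ι → N} (h : ∀ i, π (v i) = π (w i)) :
    a v = a w := by
  classical
  cases nonempty_fintype ι
  have key (s : Finset ι) : a (s.piecewise w v) = a v := by
    induction s using Finset.induction_on with
    | empty => simp
    | insert j s hj ih =>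
      rw [Finset.piecewise_insert, ← ih, ← sub_eq_zero]
      conv_lhs => enter [2]; rw [← Function.update_eq_self j (s.piecewise w v)]
      rw [← AlternatingMap.map_update_sub]
      refine ha _ j ?_
      simp [hj, h]
  simpa using (key Finset.univ).symm

/-- An alternating map that vanishes as soon as one argument lies in the kernel of a surjection
descends along this surjection. -/
lemma AlternatingMap.exists_comp_eq_of_surjective [Finite ι] {π : N →ₗ[R] M}
    (hπ : Function.Surjective π) (a : N [⋀^ι]→ₗ[R] P)
    (ha : ∀ v i, v i ∈ LinearMap.ker π → a v = 0) :
    ∃ b : M [⋀^ι]→ₗ[R] P, ∀ v, b (fun i => π (v i)) = a v := by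
  have hs := Function.surjInv_eq hπ
  have key [DecidableEq ι] (m : ι → M) (i : ι) (z : M) (z' : N) (hz : π z' = z) :
      (a fun k => Function.surjInv hπ (Function.update m i z k)) =
        a (Function.update (fun k => Function.surjInv hπ (m k)) i z') := by
    refine eq_of_map_eq ha fun k => ?_
    obtain rfl | hk := eq_or_ne k i
    · simp [hs, hz]
    · simp [hs, hk]
  refine ⟨{ toFun m := a fun i => Function.surjInv hπ (m i)
            map_update_add' m i x y := ?_
            map_update_smul' m i c x := ?_
            map_eq_zero_of_eq' m i j hij hne := ?_ }, fun v => eq_of_map_eq ha fun i => hs _⟩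
  · rw [key m i (x + y) (Function.surjInv hπ x + Function.surjInv hπ y) (by simp [hs]),
      key m i x _ (hs x), key m i y _ (hs y), AlternatingMap.map_update_add]
  · rw [key m i (c • x) (c • Function.surjInv hπ x) (by simp [hs]),
      key m i x _ (hs x), AlternatingMap.map_update_smul]
  · exact a.map_eq_zero_of_eq _ (by rw [hij]) hne

variable {n : ℕ}

lemma detRowAlternating_single_one :
    Matrix.detRowAlternating (R := R) (fun i : Fin n => Pi.single i 1) = 1 := by
  have h : (fun i : Fin n => Pi.single i 1) = (1 : Matrix (Fin n) (Fin n) R) := by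
    ext i j
    exact Matrix.one_eq_pi_single.symm
  rw [h]
  exact Matrix.det_one

lemma AlternatingMap.map_eq_det_smul (a : (Fin n → R) [⋀^Fin n]→ₗ[R] P)
    (v : Matrix (Fin n) (Fin n) R) :
    a v = v.det • a (fun i => Pi.single i 1) := by
  have h : a = Matrix.detRowAlternating.smulRight (a (fun i => Pi.single i 1)) := by
    refine Module.Basis.ext_alternating (Pi.basisFun R (Fin n)) fun w hw => ?_
    let τ : Equiv.Perm (Fin n) := Equiv.ofBijective w (Finite.injective_iff_bijective.1 hw)
    have h1 := a.map_perm (fun i => Pi.single i 1) τ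
    have h2 := (Matrix.detRowAlternating (R := R)).map_perm (fun i : Fin n => Pi.single i 1) τ
    rw [detRowAlternating_single_one] at h2
    have hτ : (fun i => (Pi.basisFun R (Fin n)) (w i)) =
        (fun i : Fin n => (Pi.single i 1 : Fin n → R)) ∘ τ := by
      ext1 i
      simp [τ]
    rw [hτ, AlternatingMap.smulRight_apply, h2, h1, Units.smul_def, Units.smul_def,
      smul_assoc, one_smul]
  conv_lhs => rw [h]
  rfl

lemma det_updateRow_mem_span (A : Matrix (Fin n) (Fin n) R) (i : Fin n) (b : Fin n → R) :
    (A.updateRow i b).det ∈ Ideal.span (Set.range b) := by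
  rw [← Matrix.cramer_transpose_apply, Matrix.cramer_eq_adjugate_mulVec]
  rw [Matrix.mulVec, dotProduct]
  refine Ideal.sum_mem _ fun k _ => ?_
  exact Ideal.mul_mem_left _ _ (Ideal.subset_span (Set.mem_range_self k))

/-- The top exterior power of the quotient of a free module of rank `n` by a single element is the
quotient of the ring by the coordinates of this element. -/
theorem nonempty_exteriorPower_equiv_quotient {π : (Fin n → R) →ₗ[R] M}
    (hπ : Function.Surjective π) {g : Fin n → R}
    (hker : LinearMap.ker π = Submodule.span R {g}) :
    Nonempty ((⋀[R]^n M) ≃ₗ[R] (R ⧸ Ideal.span (Set.range g))) := by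
  let ω : ⋀[R]^n M := exteriorPower.ιMulti R n (fun i => π (Pi.single i 1))
  have hω (v : Matrix (Fin n) (Fin n) R) :
      exteriorPower.ιMulti R n (fun i => π (v i)) = v.det • ω :=
    ((exteriorPower.ιMulti R n).compLinearMap π).map_eq_det_smul v
  have hgω (j : Fin n) : g j • ω = 0 := by
    have h := hω (Matrix.updateRow 1 j g)
    rw [← Matrix.cramer_transpose_apply, Matrix.transpose_one, Matrix.cramer_one] at h
    rw [Module.End.one_apply] at h
    rw [← h]
    refine (exteriorPower.ιMulti R n).map_coord_zero j ?_
    rw [Matrix.updateRow_self, ← LinearMap.mem_ker, hker]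
    exact Submodule.mem_span_singleton_self g
  obtain ⟨b, hb⟩ := AlternatingMap.exists_comp_eq_of_surjective hπ
    ((Ideal.span (Set.range g)).mkQ.compAlternatingMap Matrix.detRowAlternating) (by
      intro (v : Matrix (Fin n) (Fin n) R) i hv
      rw [hker, Submodule.mem_span_singleton] at hv
      obtain ⟨c, hc⟩ := hv
      have h := det_updateRow_mem_span v i (c • g)
      rw [hc, Matrix.updateRow_eq_self, ← hc] at h
      refine (Submodule.Quotient.mk_eq_zero _).2 (Ideal.span_le.2 ?_ h)
      rintro _ ⟨k, rfl⟩
      exact Ideal.mul_mem_left _ c (Ideal.subset_span ⟨k, rfl⟩))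
  let Ψ : R ⧸ Ideal.span (Set.range g) →ₗ[R] ⋀[R]^n M :=
    (Ideal.span (Set.range g)).liftQ (LinearMap.toSpanSingleton R _ ω) (by
      rw [Ideal.span, Submodule.span_le]
      rintro _ ⟨k, rfl⟩
      simpa using hgω k)
  refine ⟨(LinearEquiv.ofBijective Ψ ⟨?_, ?_⟩).symm⟩
  · refine Function.LeftInverse.injective (g := exteriorPower.alternatingMapLinearEquiv b) ?_
    rintro ⟨r⟩
    change exteriorPower.alternatingMapLinearEquiv b (r • ω) = Submodule.Quotient.mk r
    rw [map_smul, exteriorPower.alternatingMapLinearEquiv_apply_ιMulti, hb,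
      LinearMap.compAlternatingMap_apply, detRowAlternating_single_one, ← map_smul, smul_eq_mul,
      mul_one, Submodule.mkQ_apply]
  · rw [← LinearMap.range_eq_top, ← top_le_iff, ← exteriorPower.ιMulti_span, Submodule.span_le]
    rintro _ ⟨m, rfl⟩
    choose v hv using fun i => hπ (m i)
    refine ⟨Submodule.Quotient.mk (Matrix.det v), (hω v).symm.trans ?_⟩
    simp only [hv]

end ExteriorPower

namespace CategoryTheory.ShortComplex

section TwoTerm

variable {C : Type*} [Category* C] [Abelian C] (S : ShortComplex C)

/-- The first map of a short complex, as a chain complex in degrees one and zero. -/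
noncomputable def twoTermComplex : ChainComplex C ℕ :=
  HomologicalComplex.double S.f (c := ComplexShape.down ℕ) (i₀ := 1) (i₁ := 0) (by simp)

/-- The term in degree zero of the two-term complex. -/
noncomputable def twoTermComplexXZero : S.twoTermComplex.X 0 ≅ S.X₂ :=
  HomologicalComplex.doubleXIso₁ S.f _ (by simp)

/-- The term in degree one of the two-term complex. -/
noncomputable def twoTermComplexXOne : S.twoTermComplex.X 1 ≅ S.X₁ :=
  HomologicalComplex.doubleXIso₀ S.f _

lemma twoTermComplex_d :
    S.twoTermComplex.d 1 0 = S.twoTermComplexXOne.hom ≫ S.f ≫ S.twoTermComplexXZero.inv :=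
  HomologicalComplex.double_d _ _ (by simp)

lemma twoTermComplex_d_comp :
    S.twoTermComplex.d 1 0 ≫ S.twoTermComplexXZero.hom = S.twoTermComplexXOne.hom ≫ S.f := by
  simp [twoTermComplex_d]

lemma twoTermComplex_d_eq_zero {m : ℕ} (k : ℕ) (hm : m ≠ 1) : S.twoTermComplex.d m k = 0 :=
  HomologicalComplex.double_d_eq_zero₀ _ _ _ _ hm

lemma isZero_twoTermComplex_X (n : ℕ) : Limits.IsZero (S.twoTermComplex.X (n + 2)) :=
  HomologicalComplex.isZero_double_X S.f _ _ (by simp) (by simp)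

/-- The augmentation of the two-term complex. -/
noncomputable def twoTermComplexπ :
    S.twoTermComplex ⟶ (ChainComplex.single₀ C).obj S.X₃ :=
  (ChainComplex.toSingle₀Equiv _ _).symm
    ⟨S.twoTermComplexXZero.hom ≫ S.g, by simp [twoTermComplex_d]⟩

lemma twoTermComplexπ_f_zero : S.twoTermComplexπ.f 0 = S.twoTermComplexXZero.hom ≫ S.g :=
  ChainComplex.toSingle₀Equiv_symm_apply_f_zero _ _

variable {S}

/-- A short exact sequence whose first two terms are projective is a projective resolution of the
third term. -/
noncomputable def ShortExact.projectiveResolution (hS : S.ShortExact)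
    [Projective S.X₁] [Projective S.X₂] : ProjectiveResolution S.X₃ where
  complex := S.twoTermComplex
  projective n := by
    match n with
    | 0 => exact Projective.of_iso S.twoTermComplexXZero.symm inferInstance
    | 1 => exact Projective.of_iso S.twoTermComplexXOne.symm inferInstance
    | n + 2 => exact (S.isZero_twoTermComplex_X n).projective
  π := S.twoTermComplexπ
  quasiIso := ⟨fun n => by
    match n with
    | 0 =>
      rw [ChainComplex.quasiIsoAt₀_iff, ShortComplex.quasiIso_iff_of_zeros' _
        (S.twoTermComplex_d_eq_zero 0 (by simp)) rfl rfl]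
      refine (ShortComplex.exact_and_epi_g_iff_of_iso (S₂ := S) ?_).2 ⟨hS.exact, hS.epi_g⟩
      refine ShortComplex.isoMk S.twoTermComplexXOne S.twoTermComplexXZero (Iso.refl _) ?_ ?_
      · exact S.twoTermComplex_d_comp.symm
      · exact S.twoTermComplexπ_f_zero.symm.trans
          (Category.comp_id (S.twoTermComplexπ.f 0)).symm
    | 1 =>
      rw [quasiIsoAt_iff_exactAt' _ _ (ChainComplex.exactAt_succ_single_obj _ _),
        HomologicalComplex.exactAt_iff' _ 2 1 0 (by simp) (by simp),
        ShortComplex.exact_iff_mono _ (S.twoTermComplex_d_eq_zero 1 (by simp))]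
      have := hS.mono_f
      change Mono (S.twoTermComplex.d 1 0)
      rw [twoTermComplex_d]
      infer_instance
    | n + 2 =>
      rw [quasiIsoAt_iff_exactAt' _ _ (ChainComplex.exactAt_succ_single_obj _ _)]
      exact ShortComplex.exact_of_isZero_X₂ _ (S.isZero_twoTermComplex_X n)⟩

end TwoTerm

/-- If the second map of a short complex of modules vanishes, its homology is any quotient of the
middle term by the range of the first map. -/
lemma nonempty_homology_equiv_of_surjective {R : Type*} [Ring R]
    (T : ShortComplex (ModuleCat R)) (hg : T.g = 0) {Q : Type*} [AddCommGroup Q] [Module R Q]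
    (ev : T.X₂ →ₗ[R] Q) (hev : Function.Surjective ev)
    (hker : ∀ x, ev x = 0 ↔ ∃ y, T.f.hom y = x) :
    Nonempty (T.homology ≃ₗ[R] Q) := by
  have htop : LinearMap.ker T.g.hom = ⊤ := by simp [hg]
  refine ⟨T.moduleCatHomologyIso.toLinearEquiv ≪≫ₗ
    Submodule.quotEquivOfEq _ (LinearMap.ker (ev ∘ₗ (LinearMap.ker T.g.hom).subtype)) ?_ ≪≫ₗ
    LinearMap.quotKerEquivOfSurjective (ev ∘ₗ (LinearMap.ker T.g.hom).subtype) ?_⟩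
  · ext ⟨x, hx⟩
    rw [LinearMap.mem_ker, LinearMap.mem_range]
    exact (exists_congr fun y => Subtype.ext_iff).trans (hker x).symm
  · intro q
    obtain ⟨x, rfl⟩ := hev q
    exact ⟨⟨x, htop ▸ Submodule.mem_top⟩, rfl⟩

end CategoryTheory.ShortComplex

/-- If `M` is the quotient of a free module of rank `n` by a free submodule generated by one
element `g`, then `Ext¹(M, R)` is the quotient of `R` by the coordinates of `g`. -/
theorem nonempty_ext_one_equiv_quotient {R : Type} [CommRing R] {n : ℕ} {M : Type}
    [AddCommGroup M] [Module R M] {π : (Fin n → R) →ₗ[R] M}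
    (hπ : Function.Surjective π) {g : Fin n → R}
    (hker : LinearMap.ker π = Submodule.span R {g})
    (hg : Function.Injective (LinearMap.toSpanSingleton R (Fin n → R) g)) :
    Nonempty ((((Ext R (ModuleCat R) 1).obj (op (ModuleCat.of R M))).obj
      (ModuleCat.of R R)) ≃ₗ[R] (R ⧸ Ideal.span (Set.range g))) := by
  have hπg : π g = 0 := by
    rw [← LinearMap.mem_ker, hker]; exact Submodule.mem_span_singleton_self g
  let S : ShortComplex (ModuleCat R) :=
    ShortComplex.mk (ModuleCat.ofHom (LinearMap.toSpanSingleton R (Fin n → R) g))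
      (ModuleCat.ofHom π) (by ext; simp [hπg])
  have hS : S.ShortExact :=
    { exact := by
        rw [ShortComplex.moduleCat_exact_iff_range_eq_ker]
        exact (LinearMap.range_toSpanSingleton g).trans hker.symm
      mono_f := (ModuleCat.mono_iff_injective _).2 hg
      epi_g := (ModuleCat.epi_iff_surjective _).2 hπ }
  have : Projective S.X₁ := (IsProjective.iff_projective (R := R) R).1 inferInstance
  have : Projective S.X₂ := (IsProjective.iff_projective (R := R) (Fin n → R)).1 inferInstance
  let Y := ModuleCat.of R R
  let K := S.twoTermComplex.linearYonedaObj R Y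
  let ev : (S.twoTermComplex.X 1 ⟶ Y) →ₗ[R] R ⧸ Ideal.span (Set.range g) :=
    (Ideal.span (Set.range g)).mkQ ∘ₗ
      { toFun h := (S.twoTermComplexXOne.inv ≫ h).hom (1 : R)
        map_add' h k := by simp
        map_smul' c h := by simp }
  have hev (h) : ev h = Submodule.Quotient.mk ((S.twoTermComplexXOne.inv ≫ h).hom (1 : R)) := rfl
  have hsurj : Function.Surjective ev := by
    intro q
    obtain ⟨r, rfl⟩ := Submodule.Quotient.mk_surjective _ q
    refine ⟨S.twoTermComplexXOne.hom ≫ ModuleCat.ofHom (LinearMap.toSpanSingleton R R r), ?_⟩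
    rw [hev, Iso.inv_hom_id_assoc, ModuleCat.hom_ofHom, LinearMap.toSpanSingleton_apply_one]
  have hev0 (h) : ev h = 0 ↔ ∃ k : S.twoTermComplex.X 0 ⟶ Y, S.twoTermComplex.d 1 0 ≫ k = h := by
    rw [hev, Submodule.Quotient.mk_eq_zero, ShortComplex.twoTermComplex_d]
    constructor
    · intro hmem
      obtain ⟨c, hc⟩ := Ideal.mem_span_range_iff_exists_fun.1 hmem
      refine ⟨S.twoTermComplexXZero.hom ≫ ModuleCat.ofHom (Fintype.linearCombination R c), ?_⟩
      rw [← cancel_epi S.twoTermComplexXOne.inv]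
      simp only [Category.assoc, Iso.inv_hom_id_assoc]
      refine ModuleCat.hom_ext (LinearMap.ext_ring ?_)
      refine Eq.trans ?_ hc
      simp [S, Fintype.linearCombination_apply, mul_comm]
    · rintro ⟨k, rfl⟩
      simp only [Category.assoc, Iso.inv_hom_id_assoc]
      let l : (Fin n → R) →ₗ[R] R := (S.twoTermComplexXZero.inv ≫ k).hom
      change l ((1 : R) • g) ∈ _
      have hl : l g = ∑ i, l (g i • Pi.single i 1) := by
        rw [← map_sum, ← pi_eq_sum_univ']
      rw [one_smul, hl]
      refine Ideal.sum_mem _ fun i _ => ?_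
      rw [map_smul, smul_eq_mul]
      exact Ideal.mul_mem_right _ _ (Ideal.subset_span (Set.mem_range_self i))
  obtain ⟨E⟩ := (K.sc' 0 1 2).nonempty_homology_equiv_of_surjective (by
    ext h
    have hd := S.twoTermComplex_d_eq_zero (m := 2) 1 (by simp)
    exact (congrArg (fun d => d ≫ (h : S.twoTermComplex.X 1 ⟶ Y)) hd).trans Limits.zero_comp)
    ev hsurj hev0
  exact ⟨(hS.projectiveResolution.isoExt (R := R) 1 Y ≪≫
    K.homologyIsoSc' 0 1 2 (by simp) (by simp)).toLinearEquiv ≪≫ₗ E⟩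

/-- Let `R = F[x,y,z]/(f)` be a 2-dimensional isolated hypersurface singularity over a
field `F` of characteristic zero (`f` prime, and the Tjurina algebra `R ⧸ J` of the
Jacobian ideal `J` has finite length).  Then
`Ext¹_R(Ω¹_{R/F}, R) ≅ Ω³_{R/F} ≅ R/(∂f/∂x, ∂f/∂y, ∂f/∂z)`; in particular
`Ext¹_R(Ω¹_{R/F}, R)` has finite length, equal to the Tjurina number
`τ = length_R R/(∂f/∂x, ∂f/∂y, ∂f/∂z)`. -/
theorem ext1_omega1_iso_omega3 (F : Type) [Field F] [CharZero F]
    (f : MvPolynomial (Fin 3) F) (hf : Prime f)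
    (R : Type) [CommRing R] (e : (MvPolynomial (Fin 3) F ⧸ Ideal.span {f}) ≃+* R)
    [Algebra F R] (halg : ∀ c : F, algebraMap F R c = e (algebraMap F _ c))
    (J : Ideal R)
    (hJ : J = Ideal.span {e (Ideal.Quotient.mk _ (pderiv 0 f)),
      e (Ideal.Quotient.mk _ (pderiv 1 f)), e (Ideal.Quotient.mk _ (pderiv 2 f))})
    (hisolated : IsFiniteLength R (R ⧸ J)) :
    Nonempty
      ((((Ext R (ModuleCat R) 1).obj (op (ModuleCat.of R (Ω[R⁄F])))).obj
          (ModuleCat.of R R)) ≃ₗ[R] (⋀[R]^3 (Ω[R⁄F]))) ∧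
    Nonempty ((⋀[R]^3 (Ω[R⁄F]) : Submodule R _) ≃ₗ[R] (R ⧸ J)) ∧
    IsFiniteLength R (((Ext R (ModuleCat R) 1).obj (op (ModuleCat.of R (Ω[R⁄F])))).obj
          (ModuleCat.of R R)) ∧
    moduleLength R (((Ext R (ModuleCat R) 1).obj (op (ModuleCat.of R (Ω[R⁄F])))).obj
          (ModuleCat.of R R)) = moduleLength R (R ⧸ J) := by
  let φ : MvPolynomial (Fin 3) F →ₐ[F] R :=
    { (e : _ →+* R).comp (Ideal.Quotient.mk (Ideal.span {f})) with
      commutes' := fun c => (halg c).symm }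
  have hφe (p : MvPolynomial (Fin 3) F) : φ p = e (Ideal.Quotient.mk _ p) := rfl
  have hφ : Function.Surjective φ := e.surjective.comp Ideal.Quotient.mk_surjective
  have hφ0 (p : MvPolynomial (Fin 3) F) : φ p = 0 ↔ f ∣ p := by
    rw [hφe, map_eq_zero_iff e e.injective, Ideal.Quotient.eq_zero_iff_dvd]
  have hker : RingHom.ker φ = Ideal.span {f} := by
    ext p
    rw [RingHom.mem_ker, hφ0, Ideal.mem_span_singleton]
  have hspan : J = Ideal.span (Set.range (gradientAlong φ f)) := by
    rw [hJ]
    congr 1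
    ext r
    simp [gradientAlong, hφe, Fin.exists_fin_succ, eq_comm]
  have : (Ideal.span {f}).IsPrime := (Ideal.span_singleton_prime hf.ne_zero).2 hf
  have : IsDomain R := e.symm.toMulEquiv.isDomain _
  obtain ⟨i, hi⟩ := exists_not_dvd_pderiv hf
  have hinj : Function.Injective (LinearMap.toSpanSingleton R (Fin 3 → R) (gradientAlong φ f)) := by
    refine fun r s h => mul_right_cancel₀ (mt (hφ0 _).1 hi) ?_
    exact congrFun h i
  have hsurj := coordinateDifferentials_surjective hφ
  have hkerΩ := ker_coordinateDifferentials hφ hker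
  obtain ⟨E₁⟩ := nonempty_ext_one_equiv_quotient hsurj hkerΩ hinj
  obtain ⟨E₂⟩ := nonempty_exteriorPower_equiv_quotient hsurj hkerΩ
  rw [← hspan] at E₁ E₂
  exact ⟨⟨E₁.trans E₂.symm⟩, ⟨E₂⟩, E₁.symm.isFiniteLength hisolated,
    Order.krullDim_eq_of_orderIso (Submodule.orderIsoMapComap E₁)⟩
end

section
/- Let F be a field of characteristic 0 and R = F[x,y,z]/(f) a 2-dimensional isolated hypersurface singularity. Then the R-modules R and Ω¹_{R/F} are torsion-free. -/
open MvPolynomial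

open scoped TensorProduct

/-- A monic polynomial in the variable `X i` is a nonzerodivisor modulo any ideal generated by
polynomials that are univariate in other variables. -/
lemma mem_span_of_aeval_X_mul_mem {F : Type*} [CommRing F] {n : ℕ} (i : Fin (n + 1))
    {u : Polynomial F} (hu : u.Monic) {T : Set (MvPolynomial (Fin (n + 1)) F)}
    (hT : ∀ t ∈ T, ∃ j ≠ i, ∃ q : Polynomial F, t = Polynomial.aeval (X j) q)
    {h : MvPolynomial (Fin (n + 1)) F}
    (hh : Polynomial.aeval (X i) u * h ∈ Ideal.span T) : h ∈ Ideal.span T := by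
  let Φ := (renameEquiv F (Equiv.swap 0 i)).trans (finSuccEquiv F n)
  have hΦi : Φ (X i) = Polynomial.X := by
    simp [Φ, finSuccEquiv_X_zero]
  have hΦj : ∀ j ≠ i, ∃ k, Φ (X j) = Polynomial.C (X k) := by
    intro j hj
    obtain ⟨k, hk⟩ := Fin.exists_succ_eq.mpr
      (show Equiv.swap 0 i j ≠ 0 by rw [Ne, Equiv.swap_apply_eq_iff]; simpa using hj)
    exact ⟨k, by simp [Φ, ← hk, finSuccEquiv_X_succ]⟩
  have hΦT : ∀ t ∈ T, ∃ a, Φ t = Polynomial.C a := by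
    intro t ht
    obtain ⟨j, hj, q, rfl⟩ := hT t ht
    obtain ⟨k, hk⟩ := hΦj j hj
    refine ⟨Polynomial.aeval (X k) q, ?_⟩
    rw [← Polynomial.aeval_algHom_apply, hk]
    exact Polynomial.aeval_algHom_apply
      (Polynomial.CAlgHom (R := F) (A := MvPolynomial (Fin n) F)) (X k) q
  have hΦu : Φ (Polynomial.aeval (X i) u) = u.map (algebraMap F (MvPolynomial (Fin n) F)) := by
    rw [← Polynomial.aeval_algHom_apply, hΦi, ← Polynomial.aeval_map_algebraMap
      (MvPolynomial (Fin n) F), Polynomial.aeval_X_left_apply]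
  let I : Ideal (MvPolynomial (Fin n) F) := Ideal.span (Polynomial.C ⁻¹' (Φ '' T))
  have hI : (Ideal.span T).map Φ.toRingEquiv = I.map Polynomial.C := by
    rw [Ideal.map_span, Ideal.map_span, Set.image_preimage_eq_of_subset]
    · rfl
    · rintro _ ⟨t, ht, rfl⟩
      obtain ⟨a, ha⟩ := hΦT t ht
      exact ⟨a, ha.symm⟩
  have key : ∀ t, t ∈ Ideal.span T ↔
      (Φ t).map (Ideal.Quotient.mk I) = 0 := by
    intro t
    rw [← Polynomial.coe_mapRingHom, ← RingHom.mem_ker, Polynomial.ker_mapRingHom,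
      Ideal.mk_ker, ← hI, ← Ideal.comap_symm, Ideal.mem_comap]
    exact (Iff.of_eq (congrArg (· ∈ Ideal.span T) (Φ.symm_apply_apply t))).symm
  rw [key] at hh ⊢
  rw [map_mul, Polynomial.map_mul, hΦu] at hh
  exact ((hu.map _).map _).mul_right_eq_zero_iff.mp hh

/-- A pair `f, g` with `f` prime not dividing `g` generates an unmixed ideal: multiplication by
the members of a regular sequence of length three does not kill any nonzero class modulo
`(f, g)`. -/
lemma mem_span_pair_of_regular_mul_mem {S : Type*} [CommRing S] [IsDomain S] {f g s a b c : S}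
    (hf : Prime f) (hg : ¬ f ∣ g) (ha : a ≠ 0) (hab : ∀ h, a ∣ b * h → a ∣ h)
    (hc : ∀ h, c * h ∈ Ideal.span {a, b} → h ∈ Ideal.span {a, b})
    (has : a * s ∈ Ideal.span {f, g}) (hbs : b * s ∈ Ideal.span {f, g})
    (hcs : c * s ∈ Ideal.span {f, g}) : s ∈ Ideal.span {f, g} := by
  rw [Ideal.mem_span_pair] at has hbs hcs
  obtain ⟨α₁, β₁, h₁⟩ := has
  obtain ⟨α₂, β₂, h₂⟩ := hbs
  obtain ⟨α₃, β₃, h₃⟩ := hcs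
  have hg0 : g ≠ 0 := fun h ↦ hg (h ▸ dvd_zero f)
  have syzygy : ∀ u v : S, u * f = v * g → ∃ h, u = g * h ∧ v = f * h := by
    intro u v huv
    obtain ⟨h, rfl⟩ := (hf.dvd_or_dvd (Dvd.intro_left u huv)).resolve_right hg
    exact ⟨h, mul_right_cancel₀ hf.ne_zero (by linear_combination huv), rfl⟩
  obtain ⟨h₁₂, hα, hβ⟩ := syzygy (b * α₁ - a * α₂) (a * β₂ - b * β₁)
    (by linear_combination b * h₁ - a * h₂)
  obtain ⟨h₁₃, hα₁₃, -⟩ := syzygy (c * α₁ - a * α₃) (a * β₃ - c * β₁)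
    (by linear_combination c * h₁ - a * h₃)
  obtain ⟨h₂₃, hα₂₃, -⟩ := syzygy (c * α₂ - b * α₃) (b * β₃ - c * β₂)
    (by linear_combination c * h₂ - b * h₃)
  have hcocycle : c * h₁₂ = -h₂₃ * a + h₁₃ * b := mul_left_cancel₀ hg0 (by
    linear_combination -c * hα + b * hα₁₃ - a * hα₂₃)
  obtain ⟨k₂, k₁, hk⟩ := Ideal.mem_span_pair.mp
    (hc h₁₂ (Ideal.mem_span_pair.mpr ⟨_, _, hcocycle.symm⟩))
  obtain ⟨t, ht⟩ := hab (α₁ - g * k₁) ⟨α₂ + g * k₂, by linear_combination hα - g * hk⟩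
  obtain ⟨t', ht'⟩ := hab (β₁ + f * k₁) ⟨β₂ - f * k₂, by linear_combination -hβ + f * hk⟩
  refine Ideal.mem_span_pair.mpr ⟨t, t', mul_left_cancel₀ ha ?_⟩
  linear_combination h₁ - f * ht - g * ht'

/-- An ideal of finite colength in a polynomial ring over a field contains a monic polynomial in
each variable. -/
lemma exists_monic_aeval_X_mem {F : Type*} [Field F] {n : ℕ} (J : Ideal (MvPolynomial (Fin n) F))
    [IsArtinianRing (MvPolynomial (Fin n) F ⧸ J)] (i : Fin n) :
    ∃ u : Polynomial F, u.Monic ∧ Polynomial.aeval (X i) u ∈ J := by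
  have : Module.Finite F (MvPolynomial (Fin n) F ⧸ J) := (Module.finite_iff_isArtinianRing F _).mpr ‹_›
  obtain ⟨u, hu, h0⟩ := Algebra.IsIntegral.isIntegral (R := F) (Ideal.Quotient.mk J (X i))
  refine ⟨u, hu, ?_⟩
  rw [← Ideal.Quotient.eq_zero_iff_mem, ← Ideal.Quotient.mkₐ_eq_mk F,
    ← Polynomial.aeval_algHom_apply]
  exact h0

/-- In `F[x,y,z]`, the ideal `(f, g)` with `f` prime not dividing `g` is saturated with respect to
ideals of finite colength. -/
lemma mem_span_pair_of_isArtinianRing {F : Type*} [Field F] {f g s : MvPolynomial (Fin 3) F}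
    (hf : Prime f) (hg : ¬ f ∣ g) (J : Ideal (MvPolynomial (Fin 3) F))
    [IsArtinianRing (MvPolynomial (Fin 3) F ⧸ J)]
    (hJ : ∀ j ∈ J, j * s ∈ Ideal.span {f, g}) : s ∈ Ideal.span {f, g} := by
  choose u hu huJ using exists_monic_aeval_X_mem J
  have regular : ∀ i, ∀ T : Set (Fin 3), i ∉ T → ∀ h,
      Polynomial.aeval (X i) (u i) * h ∈
        Ideal.span ((fun j ↦ Polynomial.aeval (X j : MvPolynomial (Fin 3) F) (u j)) '' T) →
      h ∈ Ideal.span ((fun j ↦ Polynomial.aeval (X j : MvPolynomial (Fin 3) F) (u j)) '' T) := by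
    intro i T hi h
    refine mem_span_of_aeval_X_mul_mem i (hu i) ?_
    rintro _ ⟨j, hj, rfl⟩
    exact ⟨j, fun hji ↦ hi (hji ▸ hj), u j, rfl⟩
  refine mem_span_pair_of_regular_mul_mem hf hg (a := Polynomial.aeval (X 0) (u 0))
    (b := Polynomial.aeval (X 1) (u 1)) (c := Polynomial.aeval (X 2) (u 2)) ?_ ?_ ?_
    (hJ _ (huJ 0)) (hJ _ (huJ 1)) (hJ _ (huJ 2))
  · intro h0
    simpa using regular 0 ∅ (by simp) 1 (by simp [h0])
  · intro h
    simpa [Set.image_singleton, Ideal.mem_span_singleton] using regular 1 {0} (by simp) h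
  · intro h
    simpa [Set.image_pair] using regular 2 {0, 1} (by simp) h

/-- Let `B = A/(f)` be a domain with `Ω[A⁄K]` free on a basis `b`. If divisibility of all products
of `s` with the coordinates of `df` by a nonzero `r` forces `r ∣ s`, then `Ω[B⁄K]` is
torsion-free. -/
lemma torsion_kaehlerDifferential_eq_bot {K A B ι : Type*} [CommRing K] [CommRing A] [CommRing B]
    [IsDomain B] [Algebra K A] [Algebra K B] [Algebra A B] [IsScalarTower K A B]
    (hsurj : Function.Surjective (algebraMap A B)) (b : Module.Basis ι A (Ω[A⁄K])) {f : A}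
    (hker : RingHom.ker (algebraMap A B) = Ideal.span {f})
    (hdvd : ∀ r s : B, r ≠ 0 →
      (∀ i, r ∣ s * algebraMap A B (b.repr (KaehlerDifferential.D K A f) i)) → r ∣ s) :
    Submodule.torsion B (Ω[B⁄K]) = ⊥ := by
  rw [eq_bot_iff]
  rintro ω ⟨⟨r, hr⟩, hrω⟩
  have hr0 : r ≠ 0 := nonZeroDivisors.ne_zero hr
  obtain ⟨w, rfl⟩ := KaehlerDifferential.mapBaseChange_surjective K A B hsurj ω
  let df : B ⊗[A] Ω[A⁄K] := 1 ⊗ₜ KaehlerDifferential.D K A f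
  have hfker : f ∈ RingHom.ker (algebraMap A B) := hker ▸ Ideal.mem_span_singleton_self f
  have hdf : KaehlerDifferential.mapBaseChange K A B df = 0 := by
    simp [df, RingHom.mem_ker.mp hfker]
  have hrw : KaehlerDifferential.mapBaseChange K A B (r • w) = 0 := by
    rw [map_smul]; exact hrω
  obtain ⟨x, hx⟩ :=
    (KaehlerDifferential.exact_kerCotangentToTensor_mapBaseChange K A B hsurj _).mp hrw
  obtain ⟨⟨x, hxker⟩, rfl⟩ := Ideal.toCotangent_surjective _ x
  obtain ⟨q, rfl⟩ := Ideal.mem_span_singleton'.mp (hker ▸ hxker)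
  have hx' : r • w = algebraMap A B q • df := by
    rw [← hx, KaehlerDifferential.kerCotangentToTensor_toCotangent]
    simp [df, TensorProduct.tmul_add, TensorProduct.tmul_smul, TensorProduct.smul_tmul',
      Algebra.smul_def, RingHom.mem_ker.mp hfker]
  let β := b.baseChange B
  obtain ⟨t, ht⟩ := hdvd r (algebraMap A B q) hr0 fun i ↦ ⟨β.repr w i, by
    have := DFunLike.congr_fun (congrArg β.repr hx') i
    rw [map_smul, map_smul, Finsupp.smul_apply, Finsupp.smul_apply] at this
    simpa [β, df, Algebra.smul_def, -algebraMap_smul] using this.symm⟩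
  have : Module.IsTorsionFree B (B ⊗[A] Ω[A⁄K]) := β.isTorsionFree
  have hw : w = t • df := smul_right_injective _ hr0 (by
    simp only [hx', ht, mul_smul])
  rw [Submodule.mem_bot, hw, map_smul, hdf, smul_zero]

/-- Let `R = F[x,y,z]/(f)` be a 2-dimensional isolated hypersurface singularity over a
field `F` of characteristic zero (`f` prime, and the Tjurina algebra of finite length).
Then the `R`-modules `R` and `Ω¹_{R/F}` are torsion-free. -/
theorem hypersurface_R_omega1_torsionFree (F : Type) [Field F] [CharZero F]
    (f : MvPolynomial (Fin 3) F) (hf : Prime f)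
    (R : Type) [CommRing R] (e : (MvPolynomial (Fin 3) F ⧸ Ideal.span {f}) ≃+* R)
    [Algebra F R] (halg : ∀ c : F, algebraMap F R c = e (algebraMap F _ c))
    (hisolated : IsFiniteLength R
      (R ⧸ Ideal.span {e (Ideal.Quotient.mk _ (pderiv 0 f)),
        e (Ideal.Quotient.mk _ (pderiv 1 f)), e (Ideal.Quotient.mk _ (pderiv 2 f))})) :
    Submodule.torsion R R = ⊥ ∧ Submodule.torsion R (Ω[R⁄F]) = ⊥ := by
  have hprime : (Ideal.span {f}).IsPrime := (Ideal.span_singleton_prime hf.ne_zero).mpr hf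
  have : IsDomain R := e.symm.toMulEquiv.isDomain _
  refine ⟨?_, ?_⟩
  · rw [eq_bot_iff]
    rintro x ⟨⟨r, hr⟩, hrx⟩
    exact (mul_eq_zero.mp (show r * x = 0 from hrx)).resolve_left (nonZeroDivisors.ne_zero hr)
  let φ : MvPolynomial (Fin 3) F →+* R := e.toRingHom.comp (Ideal.Quotient.mk _)
  let _ : Algebra (MvPolynomial (Fin 3) F) R := φ.toAlgebra
  have : IsScalarTower F (MvPolynomial (Fin 3) F) R := .of_algebraMap_eq fun c ↦ halg c
  have hφ : Function.Surjective φ := e.surjective.comp Ideal.Quotient.mk_surjective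
  have hφker : RingHom.ker φ = Ideal.span {f} := by
    ext x; simp [φ, RingHom.mem_ker, Ideal.Quotient.eq_zero_iff_mem]
  refine torsion_kaehlerDifferential_eq_bot hφ (KaehlerDifferential.mvPolynomialBasis F (Fin 3))
    hφker ?_
  simp only [KaehlerDifferential.mvPolynomialBasis_repr_apply]
  intro r s hr hdvd
  obtain ⟨g, rfl⟩ := hφ r
  obtain ⟨s, rfl⟩ := hφ s
  have hmem : ∀ x, φ g ∣ φ x ↔ x ∈ Ideal.span {f, g} := by
    intro x
    rw [Ideal.span_insert, ← hφker, sup_comm, ← Ideal.comap_map_of_surjective' φ hφ,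
      Ideal.mem_comap, Ideal.map_span, Set.image_singleton, Ideal.mem_span_singleton]
  have hg : ¬ f ∣ g := by
    rwa [← Ideal.mem_span_singleton, ← hφker, RingHom.mem_ker]
  set J : Ideal R := Ideal.span {e (Ideal.Quotient.mk _ (pderiv 0 f)),
        e (Ideal.Quotient.mk _ (pderiv 1 f)), e (Ideal.Quotient.mk _ (pderiv 2 f))}
  have hArt : IsArtinianRing (R ⧸ J) := by
    have := (isFiniteLength_iff_isNoetherian_isArtinian.mp hisolated).2
    exact isArtinian_of_tower R this
  have : IsArtinianRing (MvPolynomial (Fin 3) F ⧸ J.comap φ) :=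
    
    (RingEquiv.ofBijective (Ideal.quotientMap J φ le_rfl) ⟨Ideal.quotientMap_injective,
      Ideal.quotientMap_surjective hφ⟩).symm.isArtinianRing
  rw [hmem]
  refine mem_span_pair_of_isArtinianRing hf hg (J.comap φ) fun j hj ↦ ?_
  rw [← hmem, map_mul, ← Ideal.mem_span_singleton, ← smul_eq_mul,
    ← Submodule.mem_colon_singleton]
  refine (Ideal.span_le.mpr ?_ : J ≤ _) hj
  have hcolon : ∀ i, φ (pderiv i f) ∈ (Ideal.span {φ g}).colon {φ s} := fun i ↦ by
    rw [Submodule.mem_colon_singleton, smul_eq_mul, mul_comm, Ideal.mem_span_singleton]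
    exact hdvd i
  rintro _ (rfl | rfl | rfl)
  exacts [hcolon 0, hcolon 1, hcolon 2]
end
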